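/- There exists c ∈ ℤ, depending only on l and n (and not on M), such that for every M ∈ ℕ and all (M+c)-dominant multi-charges s_l, t_l ∈ ℤ^l(s) with L_{s_l} = L_{t_l} (i.e. the entries of s_l and t_l are componentwise congruent modulo n), one has s_l ⇝_M t_l. -/

import Mathlib

/-!
Write `b - a = n • d` with `∑ d = 0`. The zero-sum integer vectors are generated by the simple
roots `α_t = e_t - e_{t+1}`, so `x` and `x + n • d` are joined by a word of `L = L(d)` moves,
whatever `x` is; each move lowers a gap `x_k - x_{k+1}` by at most `2n`, so this path stays in
`C_M` as soon as `x` is `(M + 2nL)`-dominant (`exists_reach`).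

Apply this first to the vector `u = (l-1, l-3, …, 1-l)`, all of whose gaps are `2`: with
`c = 2n L(u)`, every `(M+c)`-dominant `x` can be moved inside `C_M` to `x + n • u`, which is
even more dominant, hence to `x + N n • u` for all `N` (`climb`). For `N = L(d)` the
point `a + N n • u` is so dominant that the word for `d` leads inside `C_M` to `b + N n • u`.
Steps are reversible, so the paths `a → a + N n • u → b + N n • u → b` compose. The constant `c`
depends only on `n` and `l`.
-/

/-- The move `τ̇` acting on `ℤ^l` at (0-indexed) position `k`: it adds `c` to the `k`-th
entry and subtracts `c` from the `(k+1)`-th entry.  The bijection `τ̇_i` of the paper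
(`1 ≤ i ≤ l−1`) is `tauMove l n (i−1)`, and its inverse is `tauMove l (−n) (i−1)`. -/
def tauMove (l : ℕ) (c : ℤ) (k : ℕ) (v : Fin l → ℤ) : Fin l → ℤ := fun j =>
  if j.val = k then v j + c else if j.val = k + 1 then v j - c else v j

/-- `a` is `M`-dominant: consecutive entries decrease by at least `M`. -/
def IsDominant (l : ℕ) (M : ℤ) (a : Fin l → ℤ) : Prop :=
  ∀ (k : ℕ) (h : k + 1 < l), a ⟨k, by omega⟩ - a ⟨k + 1, h⟩ ≥ M

/-- The relation `s_l ⇝_M t_l`: the entries of `s_l` and `t_l` are componentwise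
congruent mod `n` (`L_{s_l} = L_{t_l}`), and there is a path from `s_l` to `t_l` inside
`L_{s_l} ∩ C_M` (integer tuples of sum `s`, congruent to `s_l` mod `n`, `M`-dominant)
whose steps are the moves `τ̇_j^{±1}`. -/
def PathRel (n l : ℕ) (s : ℤ) (M : ℤ) (a b : Fin l → ℤ) : Prop :=
  (∀ i, a i ≡ b i [ZMOD (n : ℤ)]) ∧
  ∃ (r : ℕ) (p : ℕ → Fin l → ℤ), p 0 = a ∧ p r = b ∧
    (∀ k ≤ r, (∑ i, p k i = s) ∧ (∀ i, p k i ≡ a i [ZMOD (n : ℤ)]) ∧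
      IsDominant l M (p k)) ∧
    ∀ k < r, ∃ t : ℕ, t + 1 < l ∧
      (p (k + 1) = tauMove l (n : ℤ) t (p k) ∨ p (k + 1) = tauMove l (-(n : ℤ)) t (p k))

/-- A single move `τ̇_t^{±1}` between two `M`-dominant points. -/
def DomStep (n l : ℕ) (M : ℤ) (x y : Fin l → ℤ) : Prop :=
  IsDominant l M x ∧ IsDominant l M y ∧ ∃ t : ℕ, t + 1 < l ∧
    (y = tauMove l (n : ℤ) t x ∨ y = tauMove l (-(n : ℤ)) t x)

/-- The simple root `e_t - e_{t+1}`. -/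
def simpleRoot (l t : ℕ) : Fin l → ℤ := tauMove l 1 t 0

/-- Translation by `n • d` is realised by a path inside `C_M` from every point whose gaps exceed
`M` by at least `2nL`. -/
def Reach (n l L : ℕ) (d : Fin l → ℤ) : Prop :=
  ∀ (M : ℤ) (x : Fin l → ℤ), IsDominant l (M + 2 * n * L) x →
    Relation.ReflTransGen (DomStep n l M) x (x + (n : ℤ) • d)

theorem IsDominant.mono {l : ℕ} {K M : ℤ} {x : Fin l → ℤ} (h : IsDominant l K x) (hM : M ≤ K) :
    IsDominant l M x := fun k hk => le_trans hM (h k hk)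

theorem tauMove_eq (l : ℕ) (c : ℤ) (t : ℕ) (x : Fin l → ℤ) :
    tauMove l c t x = x + c • simpleRoot l t := by
  funext j
  simp only [tauMove, simpleRoot, Pi.add_apply, Pi.smul_apply, Pi.zero_apply, smul_eq_mul]
  split_ifs <;> ring

theorem simpleRoot_eq {l t : ℕ} (h : t + 1 < l) :
    simpleRoot l t = Pi.single ⟨t, by omega⟩ 1 - Pi.single ⟨t + 1, h⟩ 1 := by
  funext j
  simp only [simpleRoot, tauMove, Pi.sub_apply, Pi.single_apply, Fin.ext_iff, Pi.zero_apply]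
  split_ifs <;> omega

theorem sum_simpleRoot {l t : ℕ} (h : t + 1 < l) : ∑ i, simpleRoot l t i = 0 := by
  simp [simpleRoot_eq h]

theorem IsDominant.tauMove {l : ℕ} {M c m : ℤ} {x : Fin l → ℤ} (t : ℕ)
    (h : IsDominant l (M + 2 * m) x) (h1 : c ≤ m) (h2 : -m ≤ c) :
    IsDominant l M (tauMove l c t x) := by
  intro k hk
  have := h k hk
  simp only [_root_.tauMove]
  split_ifs <;> omega

theorem DomStep.symm {n l : ℕ} {M : ℤ} {x y : Fin l → ℤ} (h : DomStep n l M x y) :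
    DomStep n l M y x := by
  obtain ⟨hx, hy, t, ht, h⟩ := h
  refine ⟨hy, hx, t, ht, ?_⟩
  rcases h with rfl | rfl
  · right; simp [tauMove_eq]
  · left; simp [tauMove_eq]

theorem path_symm {n l : ℕ} {M : ℤ} {x y : Fin l → ℤ}
    (h : Relation.ReflTransGen (DomStep n l M) x y) :
    Relation.ReflTransGen (DomStep n l M) y x := by
  have : Std.Symm (DomStep n l M) := ⟨fun _ _ => DomStep.symm⟩
  exact Std.Symm.symm _ _ h

theorem path_mono {n l : ℕ} {K M : ℤ} {x y : Fin l → ℤ} (hM : M ≤ K)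
    (h : Relation.ReflTransGen (DomStep n l K) x y) :
    Relation.ReflTransGen (DomStep n l M) x y :=
  Relation.ReflTransGen.mono (fun _ _ h => ⟨h.1.mono hM, h.2.1.mono hM, h.2.2⟩) _ _ h

theorem path_dominant {n l : ℕ} {M : ℤ} {x y : Fin l → ℤ} (hx : IsDominant l M x)
    (h : Relation.ReflTransGen (DomStep n l M) x y) : IsDominant l M y := by
  induction h with
  | refl => exact hx
  | tail _ h _ => exact h.2.1

theorem pathRel_of_path {n l : ℕ} {s M : ℤ} {a b : Fin l → ℤ} (hs : ∑ i, a i = s)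
    (ha : IsDominant l M a) (h : Relation.ReflTransGen (DomStep n l M) a b) :
    PathRel n l s M a b := by
  induction h with
  | refl =>
    exact ⟨fun i => rfl, 0, fun _ => a, rfl, rfl, fun k _ => ⟨hs, fun i => rfl, ha⟩,
      fun k hk => absurd hk (by omega)⟩
  | @tail y z _ hstep ih =>
    obtain ⟨hc, r, p, hp0, hpr, hp, hstp⟩ := ih
    obtain ⟨hy, hz, t, ht, hyz⟩ := hstep
    have hyS := hp r le_rfl
    rw [hpr] at hyS
    have hex : ∃ c : ℤ, z = y + ((n : ℤ) * c) • simpleRoot l t := by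
      rcases hyz with rfl | rfl
      · exact ⟨1, by rw [tauMove_eq, mul_one]⟩
      · exact ⟨-1, by rw [tauMove_eq, mul_neg, mul_one]⟩
    obtain ⟨c, hzc⟩ := hex
    have hzs : ∑ i, z i = s := by
      simp [hzc, Finset.sum_add_distrib, ← Finset.mul_sum, sum_simpleRoot ht, hyS.1]
    have hza : ∀ i, z i ≡ a i [ZMOD (n : ℤ)] := by
      intro i
      refine Int.ModEq.trans ?_ (hyS.2.1 i)
      refine (Int.modEq_iff_dvd.2 ⟨c * simpleRoot l t i, ?_⟩).symm
      simp [hzc]; ring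
    refine ⟨fun i => (hza i).symm, r + 1, fun k => if k ≤ r then p k else z, by simp [hp0],
      by simp, ?_, ?_⟩
    · intro k _
      by_cases hk : k ≤ r
      · simpa [hk] using hp k hk
      · simpa [hk] using ⟨hzs, hza, hz⟩
    · intro k hk
      by_cases hk' : k < r
      · have h1 : k + 1 ≤ r := hk'
        have h2 : k ≤ r := hk'.le
        simpa [h1, h2] using hstp k hk'
      · obtain rfl : k = r := by omega
        refine ⟨t, ht, ?_⟩
        simpa [hpr] using hyz

theorem Reach.zero (n l : ℕ) : Reach n l 0 0 := fun M x _ => by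
  simpa using Relation.ReflTransGen.refl

theorem Reach.add {n l L₁ L₂ : ℕ} {d e : Fin l → ℤ} (h₁ : Reach n l L₁ d) (h₂ : Reach n l L₂ e) :
    Reach n l (L₁ + L₂) (d + e) := by
  intro M x hx
  have hx' : IsDominant l ((M + 2 * n * L₂) + 2 * n * L₁) x :=
    hx.mono (by push_cast; linarith)
  have p₁ := h₁ _ x hx'
  -- the first path stays so far from the walls that the second one can start at its endpoint
  have hy := path_dominant (hx'.mono (le_add_of_nonneg_right (by positivity))) p₁
  have p₂ := h₂ M _ hy
  rw [smul_add, ← add_assoc]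
  exact (path_mono (le_add_of_nonneg_right (by positivity)) p₁).trans p₂

theorem reach_simpleRoot (n : ℕ) {l t : ℕ} (ht : t + 1 < l) :
    Reach n l 1 (simpleRoot l t) ∧ Reach n l 1 (-simpleRoot l t) := by
  constructor <;> intro M x hx <;> refine .single ⟨hx.mono ?_, ?_, t, ht, ?_⟩
  · simp
  · rw [← tauMove_eq]
    exact IsDominant.tauMove (m := n) t (by simpa using hx) le_rfl (by omega)
  · left; rw [tauMove_eq]
  · simp
  · rw [smul_neg, ← neg_smul, ← tauMove_eq]
    exact IsDominant.tauMove (m := n) t (by simpa using hx) (by omega) le_rfl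
  · right; rw [tauMove_eq, smul_neg, neg_smul]

/-- The vectors `d` for which translation by `±n • d` is realised by a bounded number of moves. -/
def rootSubgroup (n l : ℕ) : AddSubgroup (Fin l → ℤ) where
  carrier := {d | ∃ L, Reach n l L d ∧ Reach n l L (-d)}
  zero_mem' := ⟨0, Reach.zero n l, by simpa using Reach.zero n l⟩
  add_mem' := by
    rintro d e ⟨L₁, h₁, h₁'⟩ ⟨L₂, h₂, h₂'⟩
    exact ⟨L₁ + L₂, h₁.add h₂, by rw [neg_add]; exact h₁'.add h₂'⟩
  neg_mem' := by
    rintro d ⟨L, h, h'⟩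
    exact ⟨L, h', by rwa [neg_neg]⟩

theorem single_sub_single_mem (n : ℕ) {l : ℕ} (hl : 0 < l) (k : ℕ) (hk : k < l) :
    (Pi.single ⟨0, hl⟩ 1 - Pi.single ⟨k, hk⟩ 1 : Fin l → ℤ) ∈ rootSubgroup n l := by
  induction k with
  | zero => rw [sub_self]; exact zero_mem _
  | succ k ih =>
    have h : simpleRoot l k ∈ rootSubgroup n l := ⟨1, reach_simpleRoot n hk⟩
    rw [simpleRoot_eq hk] at h
    simpa using add_mem (ih (by omega)) h

/-- Every zero-sum vector lies in the root lattice, hence its translation is realised by a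
bounded number of moves. -/
theorem exists_reach (n : ℕ) {l : ℕ} (hl : 0 < l) (d : Fin l → ℤ) (hd : ∑ i, d i = 0) :
    ∃ L, Reach n l L d := by
  suffices h : d ∈ rootSubgroup n l from h.imp fun _ h => h.1
  have key : d = ∑ i, (-d i) • (Pi.single ⟨0, hl⟩ 1 - Pi.single i 1 : Fin l → ℤ) := by
    simp only [smul_sub, Finset.sum_sub_distrib, ← Finset.sum_smul, Finset.sum_neg_distrib, hd]
    funext j
    simp [Finset.sum_apply, Pi.single_apply]
  rw [key]
  exact sum_mem fun i _ => zsmul_mem (single_sub_single_mem n hl i i.2) _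

/-- The vector `(l-1, l-3, …, 1-l)`, whose consecutive gaps are all `2`. -/
def twoRho (l : ℕ) : Fin l → ℤ := fun i => l - 1 - 2 * i

theorem sum_twoRho (l : ℕ) : ∑ i, twoRho l i = 0 := by
  -- the reversal of the indices changes the sign
  have h : ∑ i, twoRho l i = ∑ i, -twoRho l i := by
    rw [← Equiv.sum_comp Fin.revPerm]
    refine Finset.sum_congr rfl fun i _ => ?_
    simp only [twoRho, Fin.revPerm_apply, Fin.val_rev]
    omega
  rw [Finset.sum_neg_distrib] at h
  omega

theorem isDominant_add_twoRho {n l : ℕ} {K : ℤ} {x : Fin l → ℤ} (hx : IsDominant l K x) (N : ℕ) :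
    IsDominant l (K + 2 * n * N) (x + (n : ℤ) • (N : ℤ) • twoRho l) := by
  intro k hk
  have := hx k hk
  simp only [Pi.add_apply, Pi.smul_apply, smul_eq_mul, twoRho]
  push_cast
  linarith

/-- A point that is dominant enough for one translation by `n • twoRho l` can be translated
arbitrarily far in that direction, since its gaps only grow. -/
theorem climb {n l L : ℕ} (h : Reach n l L (twoRho l)) {M : ℤ} {x : Fin l → ℤ}
    (hx : IsDominant l (M + 2 * n * L) x) (N : ℕ) :
    Relation.ReflTransGen (DomStep n l M) x (x + (n : ℤ) • (N : ℤ) • twoRho l) := by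
  induction N with
  | zero => simpa using Relation.ReflTransGen.refl
  | succ N ih =>
    refine ih.trans ?_
    have := h M _ ((isDominant_add_twoRho (n := n) hx N).mono
      (le_add_of_nonneg_right (by positivity)))
    rw [add_assoc, ← smul_add] at this
    rwa [Nat.cast_succ, add_smul _ _ (twoRho l), one_smul]

/-- There is `c ∈ ℤ` (not depending on `M`) such that for every `M ∈ ℕ` and all
`(M+c)`-dominant multi-charges `s_l, t_l ∈ ℤ^l(s)` with `L_{s_l} = L_{t_l}`,
one has `s_l ⇝_M t_l`. -/
theorem stmt_16 (n l : ℕ) (hn : 2 ≤ n) (hl : 2 ≤ l) (s : ℤ) :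
    ∃ c : ℤ, ∀ M : ℕ, ∀ a b : Fin l → ℤ,
      (∑ i, a i = s) → (∑ i, b i = s) →
      (∀ i, a i ≡ b i [ZMOD (n : ℤ)]) →
      IsDominant l ((M : ℤ) + c) a → IsDominant l ((M : ℤ) + c) b →
      PathRel n l s (M : ℤ) a b := by
  obtain ⟨L, hL⟩ := exists_reach n (by omega) (twoRho l) (sum_twoRho l)
  refine ⟨2 * n * L, fun M a b has hbs hab ha hb => ?_⟩
  have haM : IsDominant l M a := ha.mono (le_add_of_nonneg_right (by positivity))
  choose d hd using fun i => (hab i).dvd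
  have hb_eq : b = a + (n : ℤ) • d := by
    funext i
    have := hd i
    simp only [Pi.add_apply, Pi.smul_apply, smul_eq_mul]
    omega
  have hd0 : ∑ i, d i = 0 := by
    have h : (n : ℤ) * ∑ i, d i = 0 := by
      rw [Finset.mul_sum, ← Finset.sum_congr rfl fun i _ => hd i, Finset.sum_sub_distrib, has,
        hbs, sub_self]
    exact (mul_eq_zero.1 h).resolve_left (by omega)
  obtain ⟨N, hN⟩ := exists_reach n (by omega) d hd0
  have mid := hN M _ (isDominant_add_twoRho (n := n) haM N)
  rw [add_right_comm, ← hb_eq] at mid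
  exact pathRel_of_path has haM (((climb hL ha N).trans mid).trans (path_symm (climb hL hb N)))
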